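/- Assume ∇²Θ(p) is invertible at p = (μ, c, λ) ∈ Ω, and let h := H ∘ Φ⁻¹ on a neighborhood of Φ(p) where Φ is a diffeomorphism onto its image. Then the Hessian of h at Φ(p) satisfies ∇²h = −(1/k) 𝔸ᵀ (∇²Θ(p))⁻¹ 𝔸 − c 𝔹⁻¹, where k = k(p), M = M(p), and 𝔸 = 𝔸(k, M). -/

import Mathlib

open Matrix

noncomputable section

/-- The state space `ℝ × ℝ × ℝ^N` with coordinates `(μ, c, λ)`
(respectively `(k, α, M)`). -/
abbrev E (N : ℕ) : Type := ℝ × ℝ × (Fin N → ℝ)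

/-- Index type for `(N+2) × (N+2)` matrices in `1 + 1 + N` block form. -/
abbrev Idx (N : ℕ) : Type := Fin 1 ⊕ Fin 1 ⊕ Fin N

/-- The standard basis of `ℝ × ℝ × ℝ^N`. -/
def basisVec (N : ℕ) : Idx N → E N :=
  Sum.elim (fun _ => (1, 0, 0))
    (Sum.elim (fun _ => (0, 1, 0)) (fun i => (0, 0, Pi.single i 1)))

/-- The impulse `Q(M) = (1/2) M · B⁻¹ M`. -/
def Qimp (N : ℕ) (B : Matrix (Fin N) (Fin N) ℝ) (M : Fin N → ℝ) : ℝ :=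
  (1/2) * (M ⬝ᵥ B⁻¹.mulVec M)

/-- Partial derivative `∂_μΘ`. -/
def dmu (N : ℕ) (Θ : E N → ℝ) (p : E N) : ℝ := fderiv ℝ Θ p (1, 0, 0)

/-- Partial derivative `∂_cΘ`. -/
def dc (N : ℕ) (Θ : E N → ℝ) (p : E N) : ℝ := fderiv ℝ Θ p (0, 1, 0)

/-- Gradient `∇_λΘ` in the `λ` variables. -/
def gradlam (N : ℕ) (Θ : E N → ℝ) (p : E N) : Fin N → ℝ :=
  fun i => fderiv ℝ Θ p (0, 0, Pi.single i 1)

/-- Hessian matrix of a function on `ℝ × ℝ × ℝ^N` in the standard basis. -/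
def hessMat (N : ℕ) (Θ : E N → ℝ) (p : E N) : Matrix (Idx N) (Idx N) ℝ :=
  Matrix.of fun i j =>
    fderiv ℝ (fun q => fderiv ℝ Θ q (basisVec N j)) p (basisVec N i)

/-- The wavenumber `k = 1/∂_μΘ`. -/
def kfun (N : ℕ) (Θ : E N → ℝ) (p : E N) : ℝ := 1 / dmu N Θ p

/-- The mean value `M = ∇_λΘ/∂_μΘ`. -/
def Mfun (N : ℕ) (Θ : E N → ℝ) (p : E N) : Fin N → ℝ :=
  (dmu N Θ p)⁻¹ • gradlam N Θ p

/-- The variable `α = ∂_cΘ − ∂_μΘ · Q(∇_λΘ/∂_μΘ)`. -/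
def afun (N : ℕ) (B : Matrix (Fin N) (Fin N) ℝ) (Θ : E N → ℝ) (p : E N) : ℝ :=
  dc N Θ p - dmu N Θ p * Qimp N B (Mfun N Θ p)

/-- The map `Φ = (k, α, M)`. -/
def Phi (N : ℕ) (B : Matrix (Fin N) (Fin N) ℝ) (Θ : E N → ℝ) (p : E N) : E N :=
  (kfun N Θ p, afun N B Θ p, Mfun N Θ p)

/-- `Φ` is a local diffeomorphism at `p`: it is smooth and injective on an open
neighborhood of `p`, its image is open, and it admits a smooth local inverse. -/
def IsLocalDiffeoAt (N : ℕ) (Φ : E N → E N) (p : E N) : Prop :=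
  ∃ s : Set (E N), IsOpen s ∧ p ∈ s ∧ ContDiffOn ℝ (⊤ : ℕ∞) Φ s ∧ Set.InjOn Φ s ∧
    IsOpen (Φ '' s) ∧ ∃ Ψ : E N → E N, (∀ x ∈ s, Ψ (Φ x) = x) ∧
      ContDiffOn ℝ (⊤ : ℕ∞) Ψ (Φ '' s)

end

noncomputable section

open Matrix

/-- The averaged Hamiltonian `H = k (Θ − μ ∂_μΘ − c ∂_cΘ − λ·∇_λΘ)`. -/
def Hav (N : ℕ) (Θ : E N → ℝ) (p : E N) : ℝ :=
  kfun N Θ p * (Θ p - p.1 * dmu N Θ p - p.2.1 * dc N Θ p - p.2.2 ⬝ᵥ gradlam N Θ p)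

/-- The matrix `𝔹 = [[0,1,0],[1,0,0],[0,0,B]]` in `1+1+N` block form. -/
def BBmat (N : ℕ) (B : Matrix (Fin N) (Fin N) ℝ) : Matrix (Idx N) (Idx N) ℝ :=
  Matrix.of fun i j =>
    match i, j with
    | Sum.inl _, Sum.inr (Sum.inl _) => 1
    | Sum.inr (Sum.inl _), Sum.inl _ => 1
    | Sum.inr (Sum.inr a), Sum.inr (Sum.inr b) => B a b
    | _, _ => 0

/-- The matrix `𝔸(k,M) = [[−1/k,0,0],[−Q(M)/k, k, (B⁻¹M)ᵀ],[−M/k, 0, I_N]]`. -/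
def AAmat (N : ℕ) (B : Matrix (Fin N) (Fin N) ℝ) (k : ℝ) (M : Fin N → ℝ) :
    Matrix (Idx N) (Idx N) ℝ :=
  Matrix.of fun i j =>
    match i, j with
    | Sum.inl _, Sum.inl _ => -(1/k)
    | Sum.inl _, _ => 0
    | Sum.inr (Sum.inl _), Sum.inl _ => -(Qimp N B M / k)
    | Sum.inr (Sum.inl _), Sum.inr (Sum.inl _) => k
    | Sum.inr (Sum.inl _), Sum.inr (Sum.inr j') => B⁻¹.mulVec M j'
    | Sum.inr (Sum.inr i'), Sum.inl _ => -(M i' / k)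
    | Sum.inr (Sum.inr _), Sum.inr (Sum.inl _) => 0
    | Sum.inr (Sum.inr i'), Sum.inr (Sum.inr j') => if i' = j' then 1 else 0

end


theorem aux_fderiv_line {N : ℕ} {f : E N → ℝ} {y v : E N} {d : ℝ}
    (hf : DifferentiableAt ℝ f y)
    (h : HasDerivAt (fun t : ℝ => f (y + t • v)) d 0) : fderiv ℝ f y v = d := by
  have h1 : HasLineDerivAt ℝ f d y v := h
  rw [← hf.lineDeriv_eq_fderiv]
  exact h1.lineDeriv

theorem aux_line {N : ℕ} {f : E N → ℝ} {y v : E N}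
    (hf : DifferentiableAt ℝ f y) :
    HasDerivAt (fun t : ℝ => f (y + t • v)) (fderiv ℝ f y v) 0 :=
  hf.hasFDerivAt.hasLineDerivAt v

/-- coordinates -/
def coordV (N : ℕ) (w : E N) : Idx N → ℝ :=
  Sum.elim (fun _ => w.1) (Sum.elim (fun _ => w.2.1) (fun i => w.2.2 i))

theorem aux_expand {N : ℕ} (L : E N →L[ℝ] ℝ) (w : E N) :
    L w = ∑ m, coordV N w m * L (basisVec N m) := by
  have hw : w = ∑ m, coordV N w m • basisVec N m := by
    simp only [Fintype.sum_sum_type, coordV, basisVec, Sum.elim_inl, Sum.elim_inr,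
      Finset.univ_unique, Finset.sum_singleton]
    refine Prod.ext ?_ (Prod.ext ?_ ?_)
    · simp [Prod.fst_sum]
    · simp [Prod.fst_sum, Prod.snd_sum]
    · ext i
      simp [Prod.snd_sum, Finset.sum_apply, Pi.single_apply]
  conv_lhs => rw [hw]
  simp [map_sum]

theorem aux_dot {N : ℕ} {a b : ℝ → Fin N → ℝ} {a' b' : Fin N → ℝ} {t : ℝ}
    (ha : ∀ i, HasDerivAt (fun t => a t i) (a' i) t)
    (hb : ∀ i, HasDerivAt (fun t => b t i) (b' i) t) :
    HasDerivAt (fun t => a t ⬝ᵥ b t) (a' ⬝ᵥ b t + a t ⬝ᵥ b') t := by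
  have := HasDerivAt.fun_sum (u := Finset.univ) (fun i _ => (ha i).mul (hb i))
  simpa [dotProduct, Finset.sum_add_distrib] using this

theorem aux_mulVec {N : ℕ} (C : Matrix (Fin N) (Fin N) ℝ) {a : ℝ → Fin N → ℝ}
    {a' : Fin N → ℝ} {t : ℝ}
    (ha : ∀ i, HasDerivAt (fun t => a t i) (a' i) t) (i : Fin N) :
    HasDerivAt (fun t => C.mulVec (a t) i) (C.mulVec a' i) t := by
  have := aux_dot (a := fun _ => C i) (a' := 0) (t := t)
    (fun j => by simpa using hasDerivAt_const t (C i j)) ha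
  simpa [Matrix.mulVec] using this

theorem aux_Q {N : ℕ} {B : Matrix (Fin N) (Fin N) ℝ} (hB : B.IsSymm)
    {a : ℝ → Fin N → ℝ} {a' : Fin N → ℝ} {t : ℝ}
    (ha : ∀ i, HasDerivAt (fun t => a t i) (a' i) t) :
    HasDerivAt (fun t => Qimp N B (a t)) (B⁻¹.mulVec (a t) ⬝ᵥ a') t := by
  have h := (aux_dot ha (aux_mulVec B⁻¹ ha)).const_mul (1/2 : ℝ)
  have hs : (B⁻¹)ᵀ = B⁻¹ := by rw [Matrix.transpose_nonsing_inv, hB.eq]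
  have e : a t ⬝ᵥ B⁻¹.mulVec a' = B⁻¹.mulVec (a t) ⬝ᵥ a' := by
    rw [Matrix.dotProduct_mulVec, ← Matrix.mulVec_transpose, hs]
  rw [e, dotProduct_comm a'] at h
  exact h.congr_deriv (by ring)

theorem aux_Qdiff {N : ℕ} (B : Matrix (Fin N) (Fin N) ℝ) : Differentiable ℝ (Qimp N B) := by
  unfold Qimp Matrix.mulVec dotProduct
  fun_prop

theorem aux_BBinv {N : ℕ} {B : Matrix (Fin N) (Fin N) ℝ} (hB : IsUnit B.det) :
    (BBmat N B)⁻¹ = BBmat N B⁻¹ := by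
  apply Matrix.inv_eq_right_inv
  have h := Matrix.mul_nonsing_inv B hB
  ext i j
  rcases i with i | i | i <;> rcases j with j | j | j <;>
    simp [Matrix.mul_apply, BBmat, Fintype.sum_sum_type, Matrix.one_apply]
  all_goals first
    | exact Subsingleton.elim _ _
    | (have := congrFun (congrFun h i) j
       simpa [Matrix.mul_apply, Matrix.one_apply] using this)

open Matrix in
/-- if `∇²Θ(p)` is invertible, the Hessian of `h = H ∘ Φ⁻¹` at `Φ(p)`
(for any smooth local inverse `Ψ` of `Φ` near `p`) satisfies
`∇²h = −(1/k) 𝔸ᵀ (∇²Θ(p))⁻¹ 𝔸 − c 𝔹⁻¹` with `𝔸 = 𝔸(k(p), M(p))`. -/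
theorem stmt9 (N : ℕ) (hN : 1 ≤ N) (B : Matrix (Fin N) (Fin N) ℝ)
    (hBsymm : B.IsSymm) (hBinv : IsUnit B.det)
    (Ω : Set (E N)) (hΩ : IsOpen Ω)
    (Θ : E N → ℝ) (hΘ : ContDiffOn ℝ (⊤ : ℕ∞) Θ Ω)
    (hμpos : ∀ p ∈ Ω, 0 < dmu N Θ p)
    (p : E N) (hp : p ∈ Ω) (hhess : IsUnit (hessMat N Θ p).det) :
    ∀ s : Set (E N), ∀ Ψ : E N → E N,
      IsOpen s → p ∈ s → s ⊆ Ω →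
      (∀ x ∈ s, Ψ (Phi N B Θ x) = x) →
      IsOpen (Phi N B Θ '' s) →
      ContDiffOn ℝ (⊤ : ℕ∞) Ψ (Phi N B Θ '' s) →
      hessMat N (Hav N Θ ∘ Ψ) (Phi N B Θ p)
        = (-(1 / kfun N Θ p)) •
            ((AAmat N B (kfun N Θ p) (Mfun N Θ p))ᵀ * (hessMat N Θ p)⁻¹ *
              AAmat N B (kfun N Θ p) (Mfun N Θ p))
          - p.2.1 • (BBmat N B)⁻¹ := by
  intro s Ψ hs hps hsΩ hinv hUo hΨ
  set U := Phi N B Θ '' s with hU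
  have hqU : Phi N B Θ p ∈ U := ⟨p, hps, rfl⟩
  have hΨs : ∀ y ∈ U, Ψ y ∈ s := by
    rintro _ ⟨x, hx, rfl⟩; rw [hinv x hx]; exact hx
  have hΦΨ : ∀ y ∈ U, Phi N B Θ (Ψ y) = y := by
    rintro _ ⟨x, hx, rfl⟩; rw [hinv x hx]
  have hΨp : Ψ (Phi N B Θ p) = p := hinv p hps
  have hUn : ∀ y ∈ U, U ∈ nhds y := fun y hy => hUo.mem_nhds hy
  have hΨd : ∀ y ∈ U, DifferentiableAt ℝ Ψ y := fun y hy =>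
    (hΨ.contDiffAt (hUn y hy)).differentiableAt (by simp)
  have hΘd : ∀ x ∈ Ω, DifferentiableAt ℝ Θ x := fun x hx =>
    (hΘ.contDiffAt (hΩ.mem_nhds hx)).differentiableAt (by simp)
  have hΘdd : ∀ x ∈ Ω, ∀ v, DifferentiableAt ℝ (fun q => fderiv ℝ Θ q v) x := by
    intro x hx v
    have h1 : ContDiffAt ℝ 1 (fderiv ℝ Θ) x :=
      (hΘ.contDiffAt (hΩ.mem_nhds hx)).fderiv_right (by norm_cast)
    exact (h1.differentiableAt (by simp)).clm_apply (differentiableAt_const v)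
  have hΨΩ : ∀ y ∈ U, Ψ y ∈ Ω := fun y hy => hsΩ (hΨs y hy)
  -- relations
  have hk0 : ∀ y ∈ U, 0 < y.1 := by
    intro y hy
    have h1 : kfun N Θ (Ψ y) = y.1 := congrArg Prod.fst (hΦΨ y hy)
    rw [← h1]; exact one_div_pos.mpr (hμpos _ (hΨΩ y hy))
  have hdmu : ∀ y ∈ U, dmu N Θ (Ψ y) = (y.1)⁻¹ := by
    intro y hy
    have h1 : kfun N Θ (Ψ y) = y.1 := congrArg Prod.fst (hΦΨ y hy)
    rw [← h1]; simp [kfun]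
  have hMM : ∀ y ∈ U, Mfun N Θ (Ψ y) = y.2.2 := fun y hy =>
    congrArg (fun z : E N => z.2.2) (hΦΨ y hy)
  have hgl : ∀ y ∈ U, gradlam N Θ (Ψ y) = (y.1)⁻¹ • y.2.2 := by
    intro y hy
    have h1 := hMM y hy
    have := (hk0 y hy).ne'
    rw [← h1, Mfun, hdmu y hy, smul_smul]
    simp [this]
  have hdc : ∀ y ∈ U, dc N Θ (Ψ y) = y.2.1 + (y.1)⁻¹ * Qimp N B y.2.2 := by
    intro y hy
    have h1 : afun N B Θ (Ψ y) = y.2.1 := congrArg (fun z : E N => z.2.1) (hΦΨ y hy)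
    rw [← h1, afun, hMM y hy, hdmu y hy]; ring
  -- line derivatives of coordinates
  have lk : ∀ y v : E N, HasDerivAt (fun t : ℝ => (y + t • v).1) v.1 0 := by
    intro y v
    simpa using ((hasDerivAt_id (0:ℝ)).mul_const v.1).const_add y.1
  have la : ∀ y v : E N, HasDerivAt (fun t : ℝ => (y + t • v).2.1) v.2.1 0 := by
    intro y v
    simpa using ((hasDerivAt_id (0:ℝ)).mul_const v.2.1).const_add y.2.1
  have lM : ∀ y v : E N, ∀ i, HasDerivAt (fun t : ℝ => (y + t • v).2.2 i) (v.2.2 i) 0 := by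
    intro y v i
    simpa using ((hasDerivAt_id (0:ℝ)).mul_const (v.2.2 i)).const_add (y.2.2 i)
  have lΨ : ∀ y ∈ U, ∀ v, HasDerivAt (fun t : ℝ => Ψ (y + t • v)) (fderiv ℝ Ψ y v) 0 :=
    fun y hy v => (hΨd y hy).hasFDerivAt.hasLineDerivAt v
  have lmu : ∀ y ∈ U, ∀ v, HasDerivAt (fun t : ℝ => (Ψ (y + t • v)).1) (fderiv ℝ Ψ y v).1 0 :=
    fun y hy v => (lΨ y hy v).fst
  have lc : ∀ y ∈ U, ∀ v,
      HasDerivAt (fun t : ℝ => (Ψ (y + t • v)).2.1) (fderiv ℝ Ψ y v).2.1 0 :=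
    fun y hy v => (lΨ y hy v).snd.fst
  have ll : ∀ y ∈ U, ∀ v, ∀ i,
      HasDerivAt (fun t : ℝ => (Ψ (y + t • v)).2.2 i) ((fderiv ℝ Ψ y v).2.2 i) 0 :=
    fun y hy v => hasDerivAt_pi.1 (lΨ y hy v).snd.snd
  have hΘΨd : ∀ y ∈ U, DifferentiableAt ℝ (fun y => Θ (Ψ y)) y := fun y hy =>
    (hΘd _ (hΨΩ y hy)).comp y (hΨd y hy)
  have lΘ : ∀ y ∈ U, ∀ v, HasDerivAt (fun t : ℝ => Θ (Ψ (y + t • v)))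
      ((fderiv ℝ Ψ y v).1 * (y.1)⁻¹ + (fderiv ℝ Ψ y v).2.1 * (y.2.1 + (y.1)⁻¹ * Qimp N B y.2.2)
        + (y.1)⁻¹ * ((fderiv ℝ Ψ y v).2.2 ⬝ᵥ y.2.2)) 0 := by
    intro y hy v
    have h1 := aux_line (v := v) (hΘΨd y hy)
    have h2 : fderiv ℝ (fun y => Θ (Ψ y)) y v = fderiv ℝ Θ (Ψ y) (fderiv ℝ Ψ y v) := by
      have := fderiv_comp y (hΘd _ (hΨΩ y hy)) (hΨd y hy)
      exact congrArg (fun L => L v) this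
    rw [h2, aux_expand] at h1
    convert h1 using 1
    rw [← hdc y hy, ← smul_eq_mul (y.1)⁻¹, ← dotProduct_smul, ← hgl y hy, ← hdmu y hy]
    simp [Fintype.sum_sum_type, coordV, basisVec, dmu, dc, gradlam, dotProduct, add_assoc]
  -- explicit form of h
  have hform : ∀ y ∈ U, (Hav N Θ ∘ Ψ) y = y.1 * Θ (Ψ y) - (Ψ y).1
      - (Ψ y).2.1 * (y.1 * y.2.1 + Qimp N B y.2.2) - (Ψ y).2.2 ⬝ᵥ y.2.2 := by
    intro y hy
    have h1 : kfun N Θ (Ψ y) = y.1 := congrArg Prod.fst (hΦΨ y hy)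
    have := (hk0 y hy).ne'
    simp only [Function.comp, Hav, h1, hdmu y hy, hdc y hy, hgl y hy, dotProduct_smul,
      smul_eq_mul]
    field_simp
  have hQd := aux_Qdiff B
  have hgrad : ∀ y ∈ U, ∀ v, fderiv ℝ (Hav N Θ ∘ Ψ) y v =
      (Θ (Ψ y) - (Ψ y).2.1 * y.2.1) * v.1 - (Ψ y).2.1 * y.1 * v.2.1
        - ((Ψ y).2.1 * (B⁻¹.mulVec y.2.2 ⬝ᵥ v.2.2) + (Ψ y).2.2 ⬝ᵥ v.2.2) := by
    intro y hy v
    have he := Filter.eventuallyEq_of_mem (hUn y hy) hform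
    rw [he.fderiv_eq]
    have hΨy := hΨd y hy
    have hTy := hΘΨd y hy
    have := (hk0 y hy).ne'
    apply aux_fderiv_line
    · have hz := hΨΩ y hy
      unfold dotProduct
      fun_prop (disch := assumption)
    · have h := ((((lk y v).mul (lΘ y hy v)).sub (lmu y hy v)).sub
        ((lc y hy v).mul (((lk y v).mul (la y v)).add (aux_Q hBsymm (lM y v))))).sub
        (aux_dot (ll y hy v) (lM y v))
      refine h.congr_deriv ?_
      simp
      field_simp
      ring
  -- matrices
  set q := Phi N B Θ p with hq
  set J : Matrix (Idx N) (Idx N) ℝ :=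
    Matrix.of fun i m => coordV N (fderiv ℝ Ψ q (basisVec N i)) m with hJ
  have hq1 : q.1 = kfun N Θ p := rfl
  have hq2 : q.2.2 = Mfun N Θ p := rfl
  have hkq := (hk0 q hqU).ne'
  have hJH : J * hessMat N Θ p = (1 / q.1) • (AAmat N B q.1 q.2.2)ᵀ := by
    have key : ∀ i j, (J * hessMat N Θ p) i j =
        fderiv ℝ (fun y => fderiv ℝ Θ (Ψ y) (basisVec N j)) q (basisVec N i) := by
      intro i j
      have hd := hΘdd (Ψ q) (hΨΩ q hqU) (basisVec N j)
      have := fderiv_comp q hd (hΨd q hqU)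
      have h2 := congrArg (fun L => L (basisVec N i)) this
      refine Eq.trans ?_ h2.symm
      simp only [ContinuousLinearMap.comp_apply]
      rw [aux_expand, hΨp]
      simp [Matrix.mul_apply, hJ, hessMat]
    ext i j
    rw [key]
    rcases j with j | j | j
    · have he : (fun y => fderiv ℝ Θ (Ψ y) (basisVec N (Sum.inl j))) =ᶠ[nhds q]
          fun y => (y.1)⁻¹ := Filter.eventuallyEq_of_mem (hUn q hqU) hdmu
      rw [he.fderiv_eq]
      apply aux_fderiv_line (by fun_prop (disch := assumption))
      refine ((lk q (basisVec N i)).inv (by simpa using hkq)).congr_deriv ?_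
      rcases i with i | i | i <;> simp [basisVec, AAmat]
      field_simp
    · have he : (fun y => fderiv ℝ Θ (Ψ y) (basisVec N (Sum.inr (Sum.inl j)))) =ᶠ[nhds q]
          fun y => y.2.1 + (y.1)⁻¹ * Qimp N B y.2.2 :=
        Filter.eventuallyEq_of_mem (hUn q hqU) hdc
      rw [he.fderiv_eq]
      apply aux_fderiv_line (by fun_prop (disch := assumption))
      refine ((la q (basisVec N i)).add (((lk q (basisVec N i)).inv (by simpa using hkq)).mul
        (aux_Q hBsymm (lM q (basisVec N i))))).congr_deriv ?_
      rcases i with i | i | i <;> simp [basisVec, AAmat] <;> field_simp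
    · have he : (fun y => fderiv ℝ Θ (Ψ y) (basisVec N (Sum.inr (Sum.inr j)))) =ᶠ[nhds q]
          fun y => (y.1)⁻¹ * y.2.2 j :=
        Filter.eventuallyEq_of_mem (hUn q hqU) (fun y hy => congrFun (hgl y hy) j)
      rw [he.fderiv_eq]
      apply aux_fderiv_line (by fun_prop (disch := assumption))
      refine (((lk q (basisVec N i)).inv (by simpa using hkq)).mul
        (lM q (basisVec N i) j)).congr_deriv ?_
      rcases i with i | i | i <;> simp [basisVec, AAmat, Pi.single_apply] <;> field_simp
  have hJe : J = (1 / q.1) • ((AAmat N B q.1 q.2.2)ᵀ * (hessMat N Θ p)⁻¹) := by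
    rw [← Matrix.smul_mul, ← hJH, Matrix.mul_nonsing_inv_cancel_right _ _ hhess]
  have hsB : ∀ i j, B⁻¹ i j = B⁻¹ j i := by
    have hs : (B⁻¹)ᵀ = B⁻¹ := by rw [Matrix.transpose_nonsing_inv, hBsymm.eq]
    intro i j
    exact congrFun (congrFun hs j) i
  have hmain : hessMat N (Hav N Θ ∘ Ψ) q =
      -(J * AAmat N B q.1 q.2.2) - p.2.1 • BBmat N B⁻¹ := by
    ext i j
    have he := Filter.eventuallyEq_of_mem (hUn q hqU)
      (fun y hy => hgrad y hy (basisVec N j))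
    have hΨy := hΨd q hqU
    have hTy := hΘΨd q hqU
    simp only [hessMat, Matrix.of_apply]
    rw [he.fderiv_eq]
    have h := ((((lΘ q hqU (basisVec N i)).sub ((lc q hqU (basisVec N i)).mul
        (la q (basisVec N i)))).mul_const (basisVec N j).1).sub
        (((lc q hqU (basisVec N i)).mul (lk q (basisVec N i))).mul_const (basisVec N j).2.1)).sub
        (((lc q hqU (basisVec N i)).mul (aux_dot (aux_mulVec B⁻¹ (lM q (basisVec N i)))
          (fun m => hasDerivAt_const (0:ℝ) ((basisVec N j).2.2 m)))).add
          (aux_dot (ll q hqU (basisVec N i))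
          (fun m => hasDerivAt_const (0:ℝ) ((basisVec N j).2.2 m))))
    rw [aux_fderiv_line (d := _) _ h]
    · simp only [zero_smul, add_zero, hΨp]
      rw [Matrix.sub_apply, Matrix.neg_apply, Matrix.mul_apply]
      simp only [Fintype.sum_sum_type, hJ, Matrix.of_apply]
      generalize fderiv ℝ Ψ q (basisVec N i) = w
      rcases j with j | j | j
      · have hd : ∑ x, w.2.2 x * (q.2.2 x / q.1) = q.1⁻¹ * (w.2.2 ⬝ᵥ q.2.2) := by
          rw [dotProduct, Finset.mul_sum]
          exact Finset.sum_congr rfl fun x _ => by ring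
        clear_value q
        rcases i with i | i | i <;>
          simp [basisVec, coordV, AAmat, BBmat, hd] <;>
          ring
      · rcases i with i | i | i <;>
          simp [basisVec, coordV, AAmat, BBmat] <;> ring
      · rcases i with i | i | i <;>
          simp [basisVec, coordV, AAmat, BBmat] <;> (try rw [hsB i j]) <;> ring
    · have hz := hΨΩ q hqU
      unfold dotProduct Matrix.mulVec dotProduct
      fun_prop (disch := assumption)
  rw [hmain, aux_BBinv hBinv, hJe, hq1, hq2, Matrix.smul_mul, neg_smul]
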